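/- Consider any run of the multi-level quota method (with arbitrary tie-breaking) on a multi-level apportionment instance. For every h ≥ 0, after h seats have been allocated, for any two nodes p and c such that c is a child of p, it holds that (V^h_c + 1)/R_c ≥ (V^h_p + 1)/R_p. -/

import Mathlib

/-- A multi-level apportionment instance: a rooted tree on nodes `0, …, n`
(root `0`, encoded by a parent function with `parent i < i` for `i ≠ 0`),
together with entitlements `W`. -/
structure MLA where
  n : ℕ
  parent : Fin (n + 1) → Fin (n + 1)
  parent_lt : ∀ i : Fin (n + 1), i ≠ 0 → (parent i : ℕ) < (i : ℕ)
  W : Fin (n + 1) → ℝ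
  W_pos : ∀ i, 0 < W i
  W_le_one : ∀ i, W i ≤ 1
  W_root : W 0 = 1
  W_sum : ∀ i : Fin (n + 1),
    (Finset.univ.filter (fun c => c ≠ 0 ∧ parent c = i)).Nonempty →
    ∑ c ∈ Finset.univ.filter (fun c => c ≠ 0 ∧ parent c = i), W c = 1

namespace MLA

variable (T : MLA)

/-- The set of children of node `i`. -/
def children (i : Fin (T.n + 1)) : Finset (Fin (T.n + 1)) :=
  Finset.univ.filter (fun c => c ≠ 0 ∧ T.parent c = i)

/-- The ancestor set `A(i)`: `A(0) = {0}` and `A(i) = {parent i} ∪ A(parent i)`. -/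
def ancestors (i : Fin (T.n + 1)) : Finset (Fin (T.n + 1)) :=
  if h : i = 0 then {0} else insert (T.parent i) (ancestors (T.parent i))
termination_by (i : ℕ)
decreasing_by exact T.parent_lt i h

/-- The entitlement of node `i` relative to the root: `R i = ∏_{a ∈ A(i) ∪ {i}} W a`. -/
def R (i : Fin (T.n + 1)) : ℝ := ∏ a ∈ insert i (T.ancestors i), T.W a

/-- `V` is an allocation of `h` seats. -/
def IsAlloc (h : ℕ) (V : Fin (T.n + 1) → ℕ) : Prop :=
  V 0 = h ∧ ∀ i, (T.children i).Nonempty → V i = ∑ c ∈ T.children i, V c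

/-- `V` fulfills lower quota: `V i ≥ LQ i = max_{a ∈ A(i)} ⌊(R i / R a) · V a⌋`. -/
def FulfillsLowerQuota (V : Fin (T.n + 1) → ℕ) : Prop :=
  ∀ i, ∀ a ∈ T.ancestors i, ⌊T.R i / T.R a * (V a : ℝ)⌋ ≤ (V i : ℤ)

/-- `V` fulfills upper quota: `V i ≤ UQ i = min_{a ∈ A(i)} ⌈(R i / R a) · V a⌉`. -/
def FulfillsUpperQuota (V : Fin (T.n + 1) → ℕ) : Prop :=
  ∀ i, ∀ a ∈ T.ancestors i, (V i : ℤ) ≤ ⌈T.R i / T.R a * (V a : ℝ)⌉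


/-- `P` is the set of nodes receiving the new seat in one step of an iterative
method with selection criterion `crit` (to be minimized among children) and
eligibility constraint `elig`: `P` is a root-to-leaf path, each non-root node on
the path is an eligible child of its parent minimizing `crit` among all eligible
children, and the seat counts along `P` each increase by one. -/
def IsStepWith (crit : (Fin (T.n + 1) → ℕ) → Fin (T.n + 1) → ℝ)
    (elig : (Fin (T.n + 1) → ℕ) → Fin (T.n + 1) → Prop)
    (P : Finset (Fin (T.n + 1))) (Vh Vh1 : Fin (T.n + 1) → ℕ) : Prop :=
  (0 : Fin (T.n + 1)) ∈ P ∧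
  (∀ i ∈ P, i ≠ 0 → T.parent i ∈ P) ∧
  (∀ i ∈ P, (T.children i).Nonempty → ∃ c ∈ T.children i, c ∈ P) ∧
  (∀ c ∈ P, ∀ d ∈ P, c ≠ 0 → d ≠ 0 → T.parent c = T.parent d → c = d) ∧
  (∀ c ∈ P, c ≠ 0 → elig Vh c ∧
    ∀ d ∈ T.children (T.parent c), elig Vh d → crit Vh c ≤ crit Vh d) ∧
  (∀ i, Vh1 i = Vh i + if i ∈ P then 1 else 0)

/-- `V : ℕ → (nodes → ℕ)` is a run of the iterative method given by `crit` and
`elig` (with arbitrary tie-breaking): `V 0` is the all-zero allocation and each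
`V (h+1)` is obtained from `V h` by allocating one more seat along a path. -/
def IsRun (crit : (Fin (T.n + 1) → ℕ) → Fin (T.n + 1) → ℝ)
    (elig : (Fin (T.n + 1) → ℕ) → Fin (T.n + 1) → Prop)
    (V : ℕ → Fin (T.n + 1) → ℕ) : Prop :=
  (∀ i, V 0 i = 0) ∧ ∀ h, ∃ P, T.IsStepWith crit elig P (V h) (V (h + 1))

/-- Adams' criterion: a child `c` minimizing `V c / R c` receives the seat. -/
noncomputable def adamsCrit (V : Fin (T.n + 1) → ℕ) (c : Fin (T.n + 1)) : ℝ :=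
  (V c : ℝ) / T.R c

/-- Jefferson's criterion: a child `c` minimizing `(V c + 1) / R c` receives the seat. -/
noncomputable def jeffersonCrit (V : Fin (T.n + 1) → ℕ) (c : Fin (T.n + 1)) : ℝ :=
  ((V c : ℝ) + 1) / T.R c

/-- Trivial eligibility constraint: every child is eligible. -/
def trivElig (_ : Fin (T.n + 1) → ℕ) (_ : Fin (T.n + 1)) : Prop := True

/-- Eligibility constraint of the quota method: `V c / W c < V (parent c) + 1`. -/
def quotaElig (V : Fin (T.n + 1) → ℕ) (c : Fin (T.n + 1)) : Prop :=
  (V c : ℝ) / T.W c < (V (T.parent c) : ℝ) + 1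

/-- Eligibility constraint of the upper-compliant quota method:
`V c / R c < (V a + 1) / R a` for every ancestor `a` of `c`. -/
def ucElig (V : Fin (T.n + 1) → ℕ) (c : Fin (T.n + 1)) : Prop :=
  ∀ a ∈ T.ancestors c, (V c : ℝ) / T.R c < ((V a : ℝ) + 1) / T.R a

end MLA

/-!
Fix a node and regard its children as the parties of a single-level apportionment with weights
`W`. The inequality says that, once the parent has `s` seats, every child `e` has at least
`⌈W e * (s + 1)⌉ - 1` of them. Reading this for all house sizes `L` at once, child `e` must have
`⌈W e * L⌉ - 1` seats by the time the parent has `L - 1`, which is a scheduling problem with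
deadlines; the method behaves like earliest-deadline-first. The invariant is Hall's condition: for
every `L > s`, the seats still missing for deadline `L` are at most the `L - 1 - s` seats left to
hand out. If a step serves a child that misses a seat for `L`, both sides drop by one. Otherwise
every child `e` missing a seat for `L` has a smaller `(V e + 1) / R e` than the served one, so it
was ineligible, i.e. already holds at least `W e * (s + 1)` seats; then it misses fewer than
`W e * (L - (s + 1))` seats, and summing over the children gives the condition after the step.
-/

namespace Apportionment

variable {ι : Type*} {C : Finset ι} {w : ι → ℝ} {v v' : ι → ℕ} {L : ℕ} {d e : ι}

/-- The number of further seats party `e` needs in order to satisfy `w e * L ≤ v e + 1`, i.e. to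
reach `⌈w e * L⌉ - 1` seats; the truncated subtraction makes it `0` for a party already there. -/
noncomputable def deficit (w : ι → ℝ) (v : ι → ℕ) (L : ℕ) (e : ι) : ℕ :=
  ⌈w e * L⌉₊ - (v e + 1)

/-- Hall's condition for giving every party `e ∈ C` its `⌈w e * L⌉ - 1` seats before the house
reaches size `L`, simultaneously for all future house sizes `L`: handing out all the missing seats
leaves the house size below `L`. -/
def IsSchedulable (C : Finset ι) (w : ι → ℝ) (v : ι → ℕ) : Prop :=
  ∀ L : ℕ, ∑ e ∈ C, v e < L → ∑ e ∈ C, v e + ∑ e ∈ C, deficit w v L e < L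

lemma deficit_pos_iff : 0 < deficit w v L e ↔ (v e : ℝ) + 1 < w e * L := by
  rw [deficit, tsub_pos_iff_lt, Nat.lt_ceil, Nat.cast_succ]

lemma deficit_lt_sub (h : (v e : ℝ) < w e * L) : (deficit w v L e : ℝ) < w e * L - v e := by
  have hceil : (⌈w e * L⌉₊ : ℝ) < w e * L + 1 :=
    Nat.ceil_lt_add_one ((v e).cast_nonneg.trans h.le)
  rw [deficit, Nat.cast_sub (Nat.lt_ceil.2 h), Nat.cast_succ]
  linarith

lemma deficit_le_deficit (h : v e ≤ v' e) : deficit w v' L e ≤ deficit w v L e :=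
  Nat.sub_le_sub_left (Nat.succ_le_succ h) _

lemma deficit_lt_deficit (h : v e < v' e) (hpos : 0 < deficit w v L e) :
    deficit w v' L e < deficit w v L e :=
  Nat.sub_lt_sub_left (tsub_pos_iff_lt.1 hpos) (Nat.succ_lt_succ h)

lemma add_sum_deficit_lt (hw : ∀ e ∈ C, 0 < w e) (hsum : ∑ e ∈ C, w e ≤ 1) {k : ℕ} (hkL : k < L)
    (hk : ∀ e ∈ C, 0 < deficit w v L e → w e * k ≤ v e) :
    k + ∑ e ∈ C, deficit w v L e < L := by
  rcases C.eq_empty_or_nonempty with rfl | hC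
  · simpa using hkL
  have hsub : 0 < (L : ℝ) - k := sub_pos.2 (Nat.cast_lt.2 hkL)
  have hdeficit : ∀ e ∈ C, (deficit w v L e : ℝ) < w e * (L - k) := by
    intro e he
    rcases Nat.eq_zero_or_pos (deficit w v L e) with hzero | hpos
    · simpa [hzero] using mul_pos (hw e he) hsub
    · have hlt := deficit_lt_sub ((lt_add_one _).trans (deficit_pos_iff.1 hpos))
      linarith [hk e he hpos]
  have hlt : ∑ e ∈ C, (deficit w v L e : ℝ) < L - k := calc
    _ < ∑ e ∈ C, w e * ((L : ℝ) - k) := Finset.sum_lt_sum_of_nonempty hC hdeficit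
    _ = (∑ e ∈ C, w e) * (L - k) := (Finset.sum_mul ..).symm
    _ ≤ L - k := mul_le_of_le_one_left hsub.le hsum
  rw [lt_sub_iff_add_lt'] at hlt
  exact_mod_cast hlt

lemma isSchedulable_of_sum_eq_zero (hw : ∀ e ∈ C, 0 < w e) (hsum : ∑ e ∈ C, w e ≤ 1)
    (hv : ∑ e ∈ C, v e = 0) : IsSchedulable C w v := by
  intro L hL
  rw [hv] at hL ⊢
  exact add_sum_deficit_lt hw hsum hL (by simp)

lemma IsSchedulable.mul_sum_add_one_le (h : IsSchedulable C w v) (he : e ∈ C) :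
    w e * ((∑ e ∈ C, v e : ℕ) + 1) ≤ v e + 1 := by
  have hsum : ∑ e ∈ C, deficit w v (∑ e ∈ C, v e + 1) e = 0 := by
    have := h _ (Nat.lt_succ_self _)
    lia
  have hzero := Finset.sum_eq_zero_iff.1 hsum e he
  simpa using deficit_pos_iff.not.1 hzero.not_gt

lemma IsSchedulable.congr (h : IsSchedulable C w v) (heq : ∀ e ∈ C, v' e = v e) :
    IsSchedulable C w v' := by
  intro L
  have hdeficit : ∀ e ∈ C, deficit w v' L e = deficit w v L e := fun e he => by
    rw [deficit, deficit, heq e he]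
  rw [Finset.sum_congr rfl heq, Finset.sum_congr rfl hdeficit]
  exact h L

lemma mul_le_of_ratio_le_ratio (hwd : 0 < w d) (hwe : 0 < w e) {k : ℝ}
    (hratio : (v e : ℝ) < w e * k → ((v d : ℝ) + 1) / w d ≤ ((v e : ℝ) + 1) / w e)
    (hd : deficit w v L d = 0) (he : 0 < deficit w v L e) : w e * k ≤ v e := by
  by_contra! heligible
  have hratio_lt : ((v e : ℝ) + 1) / w e < L := (div_lt_iff₀' hwe).2 (deficit_pos_iff.1 he)
  have hle_ratio : (L : ℝ) ≤ ((v d : ℝ) + 1) / w d :=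
    (le_div_iff₀' hwd).2 (not_lt.1 (deficit_pos_iff.not.1 hd.not_gt))
  exact (hle_ratio.trans (hratio heligible)).not_gt hratio_lt

theorem IsSchedulable.step (h : IsSchedulable C w v) (hw : ∀ e ∈ C, 0 < w e)
    (hsum : ∑ e ∈ C, w e ≤ 1) (hle : ∀ e ∈ C, v e ≤ v' e)
    (htotal : ∑ e ∈ C, v' e = ∑ e ∈ C, v e + 1) (hd : d ∈ C) (hvd : v d < v' d)
    (hmin : ∀ e ∈ C, (v e : ℝ) < w e * (∑ e ∈ C, v e + 1 : ℕ) →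
      ((v d : ℝ) + 1) / w d ≤ ((v e : ℝ) + 1) / w e) :
    IsSchedulable C w v' := by
  intro L hL
  rw [htotal] at hL ⊢
  have hdeficit : ∀ e ∈ C, deficit w v' L e ≤ deficit w v L e := fun e he =>
    deficit_le_deficit (hle e he)
  rcases Nat.eq_zero_or_pos (deficit w v L d) with hzero | hpos
  · have hbefore := add_sum_deficit_lt hw hsum hL fun e he =>
      mul_le_of_ratio_le_ratio (hw d hd) (hw e he) (hmin e he) hzero
    exact (Nat.add_le_add_left (Finset.sum_le_sum hdeficit) _).trans_lt hbefore
  · have hserved : ∑ e ∈ C, deficit w v' L e < ∑ e ∈ C, deficit w v L e :=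
      Finset.sum_lt_sum hdeficit ⟨d, hd, deficit_lt_deficit hvd hpos⟩
    have hbefore := h L (Nat.lt_of_succ_lt hL)
    lia

end Apportionment

namespace MLA

open Apportionment

variable {T : MLA} {p c i : Fin (T.n + 1)}

lemma mem_children : c ∈ T.children p ↔ c ≠ 0 ∧ T.parent c = p := by
  simp [children]

lemma sum_W_children (hp : (T.children p).Nonempty) : ∑ c ∈ T.children p, T.W c = 1 :=
  T.W_sum p hp

lemma ancestors_of_ne_zero (hi : i ≠ 0) :
    T.ancestors i = insert (T.parent i) (T.ancestors (T.parent i)) := by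
  rw [ancestors, dif_neg hi]

lemma le_of_mem_ancestors {a i : Fin (T.n + 1)} (ha : a ∈ T.ancestors i) : a ≤ i := by
  by_cases hi : i = 0
  · rw [ancestors, dif_pos hi, Finset.mem_singleton] at ha
    exact ha ▸ Fin.zero_le i
  · have hlt : T.parent i < i := T.parent_lt i hi
    rw [ancestors_of_ne_zero hi, Finset.mem_insert] at ha
    rcases ha with rfl | ha
    · exact hlt.le
    · exact (le_of_mem_ancestors ha).trans hlt.le
termination_by (i : ℕ)

lemma R_pos (i : Fin (T.n + 1)) : 0 < T.R i :=
  Finset.prod_pos fun a _ => T.W_pos a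

lemma R_of_mem_children (hc : c ∈ T.children p) : T.R c = T.W c * T.R p := by
  obtain ⟨hc0, rfl⟩ := mem_children.1 hc
  have hlt : T.parent c < c := T.parent_lt c hc0
  have hnotMem : c ∉ insert (T.parent c) (T.ancestors (T.parent c)) := by
    rw [Finset.mem_insert, not_or]
    exact ⟨hlt.ne', fun h => (le_of_mem_ancestors h).not_gt hlt⟩
  rw [R, ancestors_of_ne_zero hc0, Finset.prod_insert hnotMem, R]

section Step

variable {crit : (Fin (T.n + 1) → ℕ) → Fin (T.n + 1) → ℝ}
  {elig : (Fin (T.n + 1) → ℕ) → Fin (T.n + 1) → Prop}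
  {P : Finset (Fin (T.n + 1))} {U U' : Fin (T.n + 1) → ℕ}

lemma IsStepWith.notMem_of_parent_notMem (hstep : T.IsStepWith crit elig P U U')
    (hc : c ∈ T.children p) (hp : p ∉ P) : c ∉ P := by
  obtain ⟨-, hparent, -⟩ := hstep
  obtain ⟨hc0, rfl⟩ := mem_children.1 hc
  exact fun hcP => hp (hparent c hcP hc0)

lemma IsStepWith.existsUnique_child_mem (hstep : T.IsStepWith crit elig P U U')
    (hC : (T.children p).Nonempty) (hp : p ∈ P) : ∃! d, d ∈ T.children p ∧ d ∈ P := by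
  obtain ⟨-, -, hchild, hunique, -⟩ := hstep
  obtain ⟨d, hd, hdP⟩ := hchild p hp hC
  refine ⟨d, ⟨hd, hdP⟩, fun e ⟨he, heP⟩ => ?_⟩
  obtain ⟨hd0, rfl⟩ := mem_children.1 hd
  obtain ⟨he0, hparent⟩ := mem_children.1 he
  exact hunique e heP d hdP he0 hd0 hparent

lemma IsStepWith.apply_eq (hstep : T.IsStepWith crit elig P U U') (i : Fin (T.n + 1)) :
    U' i = U i + if i ∈ P then 1 else 0 :=
  hstep.2.2.2.2.2 i

lemma IsStepWith.apply_of_mem (hstep : T.IsStepWith crit elig P U U') (hi : i ∈ P) :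
    U' i = U i + 1 := by
  rw [hstep.apply_eq, if_pos hi]

lemma IsStepWith.apply_of_notMem (hstep : T.IsStepWith crit elig P U U') (hi : i ∉ P) :
    U' i = U i := by
  rw [hstep.apply_eq, if_neg hi, add_zero]

lemma IsStepWith.isAlloc {h : ℕ} (hstep : T.IsStepWith crit elig P U U') (hU : T.IsAlloc h U) :
    T.IsAlloc (h + 1) U' := by
  refine ⟨by rw [hstep.apply_of_mem hstep.1, hU.1], fun i hC => ?_⟩
  by_cases hi : i ∈ P
  · obtain ⟨d, ⟨hd, hdP⟩, hunique⟩ := hstep.existsUnique_child_mem hC hi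
    have hrest : ∀ e ∈ (T.children i).erase d, U' e = U e := fun e he =>
      have ⟨hne, he⟩ := Finset.mem_erase.1 he
      hstep.apply_of_notMem fun heP => hne (hunique e ⟨he, heP⟩)
    rw [hstep.apply_of_mem hi, hU.2 i hC, ← Finset.sum_erase_add _ _ hd,
      ← Finset.sum_erase_add _ U' hd, Finset.sum_congr rfl hrest, hstep.apply_of_mem hdP,
      add_assoc]
  · rw [hstep.apply_of_notMem hi, hU.2 i hC]
    exact Finset.sum_congr rfl fun e he =>
      (hstep.apply_of_notMem (hstep.notMem_of_parent_notMem he hi)).symm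

lemma IsRun.isAlloc {V : ℕ → Fin (T.n + 1) → ℕ} (hrun : T.IsRun crit elig V) (h : ℕ) :
    T.IsAlloc h (V h) := by
  induction h with
  | zero => simp [IsAlloc, hrun.1]
  | succ h ih =>
    obtain ⟨P, hstep⟩ := hrun.2 h
    exact hstep.isAlloc ih

end Step

section Jefferson

variable {elig : (Fin (T.n + 1) → ℕ) → Fin (T.n + 1) → Prop}
  {P : Finset (Fin (T.n + 1))} {U U' : Fin (T.n + 1) → ℕ}

lemma jeffersonCrit_of_mem_children (hc : c ∈ T.children p) :
    T.jeffersonCrit U c = ((U c : ℝ) + 1) / T.W c / T.R p := by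
  rw [jeffersonCrit, R_of_mem_children hc, div_div]

lemma quotaElig_iff_of_mem_children (hc : c ∈ T.children p) :
    T.quotaElig U c ↔ (U c : ℝ) < T.W c * (U p + 1 : ℕ) := by
  rw [quotaElig, (mem_children.1 hc).2, div_lt_iff₀' (T.W_pos c), Nat.cast_succ]

lemma IsStepWith.ratio_le_ratio (hstep : T.IsStepWith T.jeffersonCrit elig P U U')
    {d e : Fin (T.n + 1)} (hd : d ∈ T.children p) (hdP : d ∈ P) (he : e ∈ T.children p)
    (helig : elig U e) : ((U d : ℝ) + 1) / T.W d ≤ ((U e : ℝ) + 1) / T.W e := by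
  obtain ⟨-, -, -, -, hmin, -⟩ := hstep
  obtain ⟨hd0, hdp⟩ := mem_children.1 hd
  have hcrit := (hmin d hdP hd0).2 e (hdp.symm ▸ he) helig
  rwa [jeffersonCrit_of_mem_children hd, jeffersonCrit_of_mem_children he,
    div_le_div_iff_of_pos_right (R_pos p)] at hcrit

lemma IsStepWith.isSchedulable_children {h : ℕ}
    (hstep : T.IsStepWith T.jeffersonCrit elig P U U')
    (helig : ∀ c, T.quotaElig U c → elig U c) (hU : T.IsAlloc h U)
    (hC : (T.children p).Nonempty) (hsched : IsSchedulable (T.children p) T.W U) :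
    IsSchedulable (T.children p) T.W U' := by
  by_cases hp : p ∈ P
  · obtain ⟨d, ⟨hd, hdP⟩, -⟩ := hstep.existsUnique_child_mem hC hp
    have hle : ∀ e ∈ T.children p, U e ≤ U' e := fun e _ =>
      (Nat.le_add_right _ _).trans_eq (hstep.apply_eq e).symm
    have htotal : ∑ e ∈ T.children p, U' e = ∑ e ∈ T.children p, U e + 1 := by
      rw [← (hstep.isAlloc hU).2 p hC, ← hU.2 p hC, hstep.apply_of_mem hp]
    have hserved : U d < U' d := (Nat.lt_succ_self _).trans_eq (hstep.apply_of_mem hdP).symm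
    refine hsched.step (fun e _ => T.W_pos e) (sum_W_children hC).le hle htotal hd hserved ?_
    intro e he hlt
    rw [← hU.2 p hC, ← quotaElig_iff_of_mem_children he] at hlt
    exact hstep.ratio_le_ratio hd hdP he (helig e hlt)
  · exact hsched.congr fun e he =>
      hstep.apply_of_notMem (hstep.notMem_of_parent_notMem he hp)

theorem IsRun.isSchedulable_children {V : ℕ → Fin (T.n + 1) → ℕ}
    (hrun : T.IsRun T.jeffersonCrit elig V) (helig : ∀ U c, T.quotaElig U c → elig U c)
    (hC : (T.children p).Nonempty) (h : ℕ) : IsSchedulable (T.children p) T.W (V h) := by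
  induction h with
  | zero =>
    exact isSchedulable_of_sum_eq_zero (fun e _ => T.W_pos e) (sum_W_children hC).le
      (Finset.sum_eq_zero fun e _ => hrun.1 e)
  | succ h ih =>
    obtain ⟨P, hstep⟩ := hrun.2 h
    exact hstep.isSchedulable_children (helig (V h)) (hrun.isAlloc h) hC ih

end Jefferson

end MLA

/-- With `elig := T.trivElig` this covers the multi-level Jefferson method as well. -/
theorem quota_method_child_parent_ratio_general (T : MLA)
    {elig : (Fin (T.n + 1) → ℕ) → Fin (T.n + 1) → Prop}
    (helig : ∀ U c, T.quotaElig U c → elig U c) (V : ℕ → Fin (T.n + 1) → ℕ)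
    (hrun : T.IsRun T.jeffersonCrit elig V) (h : ℕ)
    (p c : Fin (T.n + 1)) (hc : c ∈ T.children p) :
    ((V h p : ℝ) + 1) / T.R p ≤ ((V h c : ℝ) + 1) / T.R c := by
  have hC : (T.children p).Nonempty := ⟨c, hc⟩
  have hquota : T.W c * ((V h p : ℝ) + 1) ≤ V h c + 1 := by
    rw [(hrun.isAlloc h).2 p hC]
    exact (hrun.isSchedulable_children helig hC h).mul_sum_add_one_le hc
  rw [MLA.R_of_mem_children hc, ← div_div, div_le_div_iff_of_pos_right (MLA.R_pos p)]
  exact (le_div_iff₀' (T.W_pos c)).2 hquota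

/-- In any run of the multi-level quota method, after `h`
seats have been allocated, for any child `c` of a node `p` we have
`(V^h_c + 1)/R_c ≥ (V^h_p + 1)/R_p`. -/
theorem quota_method_child_parent_ratio (T : MLA) (V : ℕ → Fin (T.n + 1) → ℕ)
    (hrun : T.IsRun T.jeffersonCrit T.quotaElig V) (h : ℕ)
    (p c : Fin (T.n + 1)) (hc : c ∈ T.children p) :
    ((V h p : ℝ) + 1) / T.R p ≤ ((V h c : ℝ) + 1) / T.R c :=
  quota_method_child_parent_ratio_general T (fun _ _ hquota => hquota) V hrun h p c hc
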